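/- Majority dynamics enables positive Condorcet-winner identity control: for every profile P whose Condorcet winner is a, there exists an update order σ such that a is the Condorcet winner of MD_σ(P). -/

import Mathlib

attribute [local instance] Classical.propDecidable

noncomputable section

/-- A preference over the set of alternatives `A`: a binary relation. -/
abbrev Pref (A : Type) := A → A → Prop

/-- A preference is a strict partial order: irreflexive and transitive. -/
def IsPref {A : Type} (pref : Pref A) : Prop :=
  Irreflexive pref ∧ Transitive pref

variable {A : Type} [Fintype A] [DecidableEq A]

/-- The support `n_P(ab)`: the number of agents preferring `a` to `b` in profile `P`. -/
def support {n : ℕ} (P : Fin n → Pref A) (a b : A) : ℕ :=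
  (Finset.univ.filter fun i => P i a b).card

/-- An update order: a list of ordered pairs of distinct alternatives containing,
for each unordered pair `{a, b}` of distinct alternatives, exactly one of `ab` or `ba`,
each exactly once. -/
def IsUpdateOrder (σ : List (A × A)) : Prop :=
  (∀ p ∈ σ, p.1 ≠ p.2) ∧
  (∀ a b : A, a ≠ b → σ.count (a, b) + σ.count (b, a) = 1)

/-- One step of majority dynamics, discussing the pair `p`: agents already ranking
`p.1` versus `p.2` keep their preference; every other agent adds `p.1 ≻ p.2` if
`n_P(p.1 p.2) ≥ n_P(p.2 p.1)` (ties broken in favour of the first alternative of the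
pair), and otherwise adds `p.2 ≻ p.1`, then takes the transitive closure. -/
def mdStep {n : ℕ} (P : Fin n → Pref A) (p : A × A) : Fin n → Pref A :=
  fun i =>
    if P i p.1 p.2 ∨ P i p.2 p.1 then P i
    else if support P p.2 p.1 ≤ support P p.1 p.2 then
      Relation.TransGen (fun x y => P i x y ∨ (x = p.1 ∧ y = p.2))
    else
      Relation.TransGen (fun x y => P i x y ∨ (x = p.2 ∧ y = p.1))

/-- Majority dynamics `MD_σ(P)`: process the pairs of the update order `σ` in order. -/
def MD {n : ℕ} (σ : List (A × A)) (P : Fin n → Pref A) : Fin n → Pref A :=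
  σ.foldl mdStep P

/-- `a` is a Condorcet winner in `P`. -/
def CondorcetWinner {n : ℕ} (P : Fin n → Pref A) (a : A) : Prop :=
  ∀ b, b ≠ a → support P b a < support P a b

/-- `a` is a Condorcet loser in `P`. -/
def CondorcetLoser {n : ℕ} (P : Fin n → Pref A) (a : A) : Prop :=
  ∀ b, b ≠ a → support P a b < support P b a

/-- `a` is undominated in a preference. -/
def Undominated {A : Type} (pref : Pref A) (a : A) : Prop := ∀ b, ¬ pref b a

/-- `a` is dominant in a preference. -/
def Dominant {A : Type} (pref : Pref A) (a : A) : Prop := ∀ b, b ≠ a → pref a b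

/-- `a` is dominated (by every other alternative) in a preference. -/
def DominatedIn {A : Type} (pref : Pref A) (a : A) : Prop := ∀ b, b ≠ a → pref b a

/-- Number of preferences of `P` in which `a` is undominated. -/
def udCount {n : ℕ} (P : Fin n → Pref A) (a : A) : ℕ :=
  (Finset.univ.filter fun i => Undominated (P i) a).card

/-- Number of preferences of `P` in which `a` is dominant. -/
def domCount {n : ℕ} (P : Fin n → Pref A) (a : A) : ℕ :=
  (Finset.univ.filter fun i => Dominant (P i) a).card

/-- Number of preferences of `P` in which `a` is dominated. -/
def domdCount {n : ℕ} (P : Fin n → Pref A) (a : A) : ℕ :=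
  (Finset.univ.filter fun i => DominatedIn (P i) a).card

/-- `a` is undominated in at least one preference and no alternative is undominated
in strictly more preferences than `a`. -/
def PlurUDTop {n : ℕ} (P : Fin n → Pref A) (a : A) : Prop :=
  0 < udCount P a ∧ ∀ b, udCount P b ≤ udCount P a

/-- `a` is the PlurUD-consensus alternative of `P`. -/
def PlurUDConsensus {n : ℕ} (P : Fin n → Pref A) (a : A) : Prop :=
  PlurUDTop P a ∧ ∀ b, PlurUDTop P b → b = a

/-- `a` is dominant in at least one preference and no alternative is dominant
in strictly more preferences than `a`. -/
def PlurDomTop {n : ℕ} (P : Fin n → Pref A) (a : A) : Prop :=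
  0 < domCount P a ∧ ∀ b, domCount P b ≤ domCount P a

/-- `a` is the PlurDom-consensus alternative of `P`. -/
def PlurDomConsensus {n : ℕ} (P : Fin n → Pref A) (a : A) : Prop :=
  PlurDomTop P a ∧ ∀ b, PlurDomTop P b → b = a

/-- `a` is dominated in at least one preference and no alternative is dominated
in strictly more preferences than `a`. -/
def PlurDomdTop {n : ℕ} (P : Fin n → Pref A) (a : A) : Prop :=
  0 < domdCount P a ∧ ∀ b, domdCount P b ≤ domdCount P a

/-- `a` is the (unique) plurality dominated alternative of `P`. -/
def PlurDomdConsensus {n : ℕ} (P : Fin n → Pref A) (a : A) : Prop :=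
  PlurDomdTop P a ∧ ∀ b, PlurDomdTop P b → b = a

/-- `a` is the MajUD-consensus alternative of `P`: undominated in strictly more than
`n / 2` of the preferences, and the unique alternative with this property. -/
def MajUDConsensus {n : ℕ} (P : Fin n → Pref A) (a : A) : Prop :=
  (n < 2 * udCount P a) ∧ ∀ b, n < 2 * udCount P b → b = a

/-- `a` is the MajDom-consensus alternative of `P`: dominant in strictly more than
`n / 2` of the preferences (such an alternative is automatically unique). -/
def MajDomConsensus {n : ℕ} (P : Fin n → Pref A) (a : A) : Prop :=
  n < 2 * domCount P a

/-- `a` is the UnanUD-consensus alternative of `P`: undominated in every preference,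
and the unique alternative with this property. -/
def UnanUDConsensus {n : ℕ} (P : Fin n → Pref A) (a : A) : Prop :=
  (∀ i, Undominated (P i) a) ∧ ∀ b, (∀ i, Undominated (P i) b) → b = a

/-- `a` is the UnanDom-consensus alternative of `P`: dominant in every preference. -/
def UnanDomConsensus {n : ℕ} (P : Fin n → Pref A) (a : A) : Prop :=
  ∀ i, Dominant (P i) a

/-- A preference is a strict weak ordering: there is an ordered partition of the
alternatives into levels (given by a level function `f`) such that alternatives in the
same level are incomparable, and `a ≻ b` exactly when `a` is in an earlier level. -/
def IsSWO (pref : Pref A) : Prop :=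
  ∃ (k : ℕ) (f : A → Fin k), ∀ a b : A, pref a b ↔ f a < f b

/-!
Let the pairs `ab` with `b ≠ a` be discussed first. Since `a` beats `b`, the undecided agents adopt
`a ≻ b`; this creates a new relation `c ≻ a` only for agents who already held `b ≻ a`, and those are
not undecided. So `a` stays the Condorcet winner and ends up ranked against every other alternative
by every agent. Later steps only extend the preferences, hence cannot change these rankings.
-/

section

variable {α : Type*} {R : α → α → Prop} {u v x y : α}

/-- The relation obtained from `R` by adding the pair `(u, v)` and closing transitively: how an
undecided agent adopts the ranking `u ≻ v` in majority dynamics. -/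
def insertPair (R : α → α → Prop) (u v : α) : α → α → Prop :=
  Relation.TransGen fun x y => R x y ∨ x = u ∧ y = v

theorem le_insertPair (R : α → α → Prop) (u v : α) : R ≤ insertPair R u v :=
  fun _ _ h => .single (.inl h)

theorem insertPair_self (R : α → α → Prop) (u v : α) : insertPair R u v u v :=
  .single (.inr ⟨rfl, rfl⟩)

theorem insertPair_iff [IsTrans α R] :
    insertPair R u v x y ↔ R x y ∨ Relation.ReflGen R x u ∧ Relation.ReflGen R v y := by
  constructor
  · intro h
    induction h with
    | single h =>
      obtain h | ⟨rfl, rfl⟩ := h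
      · exact .inl h
      · exact .inr ⟨.refl, .refl⟩
    | tail _ h ih =>
      obtain h | ⟨rfl, rfl⟩ := h
      · obtain hR | ⟨hxu, rfl | hv⟩ := ih
        · exact .inl (_root_.trans hR h)
        · exact .inr ⟨hxu, .single h⟩
        · exact .inr ⟨hxu, .single (_root_.trans hv h)⟩
      · exact .inr ⟨ih.elim .single And.left, .refl⟩
  · rintro (h | ⟨hxu, hvy⟩)
    · exact le_insertPair R u v x y h
    · have hxv : insertPair R u v x v := by
        obtain rfl | hxu := hxu
        · exact insertPair_self R _ v
        · exact .head (.inl hxu) (insertPair_self R u v)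
      obtain rfl | hvy := hvy
      · exact hxv
      · exact .tail hxv (.inl hvy)

end

section

variable {α : Type*}

/-- The list of all pairs `(x, y)` with `x` before `y` in the given list, one per pair of positions,
grouped by `x`. On an enumeration of the alternatives it is an update order that first settles the
head of the enumeration against everything else. -/
def orderedPairs : List α → List (α × α)
  | [] => []
  | x :: l => l.map (Prod.mk x) ++ orderedPairs l

theorem forall_mem_orderedPairs {R : α → α → Prop} {l : List α} :
    (∀ p ∈ orderedPairs l, R p.1 p.2) ↔ l.Pairwise R := by
  induction l with
  | nil => simp [orderedPairs]
  | cons x l ih => simp [orderedPairs, or_imp, forall_and, ← ih]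

theorem count_map_mk [DecidableEq α] (x y z : α) (l : List α) :
    (l.map (Prod.mk z)).count (x, y) = if z = x then l.count y else 0 := by
  split_ifs with h
  · subst h
    exact List.count_map_of_injective l _ (Prod.mk_right_injective z) y
  · exact List.count_eq_zero.2 (by simp [h])

theorem count_orderedPairs_add_count_swap [DecidableEq α] {x y : α} (hxy : x ≠ y) (l : List α) :
    (orderedPairs l).count (x, y) + (orderedPairs l).count (y, x) = l.count x * l.count y := by
  induction l with
  | nil => rfl
  | cons z l ih =>
    simp only [orderedPairs, List.count_append, count_map_mk, List.count_cons, beq_iff_eq]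
    split_ifs with hx hy
    · exact absurd (hx.symm.trans hy) hxy
    all_goals linarith

end

theorem isUpdateOrder_orderedPairs {X : Type} [DecidableEq X] {l : List X} (hl : l.Nodup)
    (hmem : ∀ x, x ∈ l) : IsUpdateOrder (orderedPairs l) := by
  refine ⟨forall_mem_orderedPairs.2 hl, fun x y hxy => ?_⟩
  rw [count_orderedPairs_add_count_swap hxy, List.count_eq_one_of_mem hl (hmem x),
    List.count_eq_one_of_mem hl (hmem y)]

section

variable {X : Type} {R : Pref X} {u v a b c : X}

theorem IsPref.isTrans (hR : IsPref R) : IsTrans X R :=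
  ⟨fun _ _ _ => @hR.2 _ _ _⟩

theorem IsPref.asymm (hR : IsPref R) (h : R u v) : ¬ R v u :=
  fun h' => hR.1 u (hR.2 h h')

theorem IsPref.insertPair (hR : IsPref R) (huv : u ≠ v) (hvu : ¬ R v u) :
    IsPref (insertPair R u v) := by
  have := hR.isTrans
  refine ⟨fun x hx => ?_, fun _ _ _ => .trans⟩
  obtain h | ⟨hxu, hvx⟩ := insertPair_iff.1 hx
  · exact hR.1 x h
  · obtain rfl | hxu := hxu <;> obtain rfl | hvx := hvx
    · exact huv rfl
    · exact hvu hvx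
    · exact hvu hxu
    · exact hvu (hR.2 hvx hxu)

variable {n : ℕ} {P Q : Fin n → Pref X} {σ : List (X × X)}

theorem le_mdStep (P : Fin n → Pref X) (p : X × X) : P ≤ mdStep P p := by
  intro i
  unfold mdStep
  split_ifs
  · exact le_rfl
  · exact le_insertPair (P i) _ _
  · exact le_insertPair (P i) _ _

theorem isPref_mdStep {i : Fin n} (hP : IsPref (P i)) {p : X × X} (hp : p.1 ≠ p.2) :
    IsPref (mdStep P p i) := by
  unfold mdStep
  split_ifs with hranked
  · exact hP
  · exact hP.insertPair hp fun h => hranked (.inr h)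
  · exact hP.insertPair hp.symm fun h => hranked (.inl h)

theorem mdStep_ranks (P : Fin n → Pref X) (p : X × X) (i : Fin n) :
    mdStep P p i p.1 p.2 ∨ mdStep P p i p.2 p.1 := by
  unfold mdStep
  split_ifs with hranked
  · exact hranked
  · exact .inl (insertPair_self ..)
  · exact .inr (insertPair_self ..)

theorem mdStep_rel_fst_iff {i : Fin n} [IsTrans X (P i)] (hab : a ≠ b)
    (hsupp : support P b a ≤ support P a b) :
    mdStep P (a, b) i c a ↔ P i c a := by
  refine ⟨fun h => ?_, le_mdStep P (a, b) i c a⟩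
  unfold mdStep at h
  split_ifs at h with hranked
  · exact h
  · obtain h | ⟨-, hba⟩ : P i c a ∨ _ ∧ Relation.ReflGen (P i) b a := insertPair_iff.1 h
    · exact h
    · obtain rfl | hba := hba
      · exact absurd rfl hab
      · exact absurd (.inr hba) hranked

theorem le_md (σ : List (X × X)) (P : Fin n → Pref X) : P ≤ MD σ P := by
  induction σ generalizing P with
  | nil => exact le_rfl
  | cons p σ ih => exact (le_mdStep P p).trans (ih _)

theorem isPref_md {i : Fin n} (hP : IsPref (P i)) (hσ : ∀ p ∈ σ, p.1 ≠ p.2) :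
    IsPref (MD σ P i) := by
  induction σ generalizing P with
  | nil => exact hP
  | cons p σ ih =>
    rw [List.forall_mem_cons] at hσ
    exact ih (isPref_mdStep hP hσ.1) hσ.2

theorem md_append (σ τ : List (X × X)) (P : Fin n → Pref X) : MD (σ ++ τ) P = MD τ (MD σ P) :=
  List.foldl_append

theorem md_ranks {p : X × X} (hp : p ∈ σ) (P : Fin n → Pref X) (i : Fin n) :
    MD σ P i p.1 p.2 ∨ MD σ P i p.2 p.1 := by
  obtain ⟨σ₁, σ₂, rfl⟩ := List.append_of_mem hp
  rw [md_append]
  exact (mdStep_ranks (MD σ₁ P) p i).imp (le_md σ₂ _ i _ _) (le_md σ₂ _ i _ _)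

theorem CondorcetWinner.mono (ha : CondorcetWinner P a) (hle : ∀ i b, P i a b → Q i a b)
    (hge : ∀ i b, Q i b a → P i b a) : CondorcetWinner Q a := fun b hb =>
  calc support Q b a
    _ ≤ support P b a := Finset.card_le_card (Finset.monotone_filter_right _ fun i _ => hge i b)
    _ < support P a b := ha b hb
    _ ≤ support Q a b := Finset.card_le_card (Finset.monotone_filter_right _ fun i _ => hle i b)

theorem CondorcetWinner.mono_of_ranks (ha : CondorcetWinner P a) (hPQ : P ≤ Q)
    (hQ : ∀ i, IsPref (Q i)) (hranks : ∀ i b, b ≠ a → P i a b ∨ P i b a) :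
    CondorcetWinner Q a := by
  refine ha.mono (fun i b => hPQ i a b) fun i b hba => ?_
  have hne : b ≠ a := fun h => (hQ i).1 a (h ▸ hba)
  exact (hranks i b hne).resolve_left fun hab => (hQ i).asymm hba (hPQ i a b hab)

theorem CondorcetWinner.mdStep (ha : CondorcetWinner P a) (hP : ∀ i, IsPref (P i)) (hb : b ≠ a) :
    CondorcetWinner (mdStep P (a, b)) a := by
  refine ha.mono (fun i c => le_mdStep P (a, b) i a c) fun i c => ?_
  have := (hP i).isTrans
  exact (mdStep_rel_fst_iff hb.symm (ha b hb).le).1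

theorem CondorcetWinner.md_map_mk (ha : CondorcetWinner P a) (hP : ∀ i, IsPref (P i)) {l : List X}
    (hl : a ∉ l) : CondorcetWinner (MD (l.map (Prod.mk a)) P) a := by
  induction l generalizing P with
  | nil => exact ha
  | cons b l ih =>
    rw [List.mem_cons, not_or] at hl
    exact ih (ha.mdStep hP (Ne.symm hl.1)) (fun i => isPref_mdStep (hP i) hl.1) hl.2

theorem CondorcetWinner.md_orderedPairs_cons (ha : CondorcetWinner P a) (hP : ∀ i, IsPref (P i))
    {l : List X} (hl : (a :: l).Nodup) (hmem : ∀ b ≠ a, b ∈ l) :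
    CondorcetWinner (MD (orderedPairs (a :: l)) P) a := by
  have hne : ∀ p ∈ orderedPairs (a :: l), p.1 ≠ p.2 := forall_mem_orderedPairs.2 hl
  have hpref := fun i => isPref_md (hP i) hne
  rw [orderedPairs, md_append] at hpref ⊢
  refine (ha.md_map_mk hP (List.nodup_cons.1 hl).1).mono_of_ranks (le_md _ _) hpref fun i b hb => ?_
  exact md_ranks (List.mem_map_of_mem (hmem b hb)) P i

end

/-- Majority dynamics enables positive Condorcet-winner identity control. -/
theorem stmt_15 {n : ℕ} (P : Fin n → Pref A) (hP : ∀ i, IsPref (P i))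
    (a : A) (ha : CondorcetWinner P a) :
    ∃ σ : List (A × A), IsUpdateOrder σ ∧ CondorcetWinner (MD σ P) a := by
  let l := (Finset.univ.erase a).toList
  have hmem : ∀ b ≠ a, b ∈ l := fun b hb => by simp [l, hb]
  have hnodup : (a :: l).Nodup := List.nodup_cons.2 ⟨by simp [l], Finset.nodup_toList _⟩
  have hcover : ∀ b, b ∈ a :: l := fun b => List.mem_cons.2 (or_iff_not_imp_left.2 (hmem b))
  exact ⟨orderedPairs (a :: l), isUpdateOrder_orderedPairs hnodup hcover,
    ha.md_orderedPairs_cons hP hnodup hmem⟩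

end
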